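/- The map φ_n : Y_n → Q_n is a surjective morphism of posets, and the partial order it induces on Q_n coincides with the componentwise order: for ε, η ∈ Q_n, ε ≤ η componentwise if and only if there exist trees t, w ∈ Y_n with φ_n(t) = ε, φ_n(w) = η and t ≤ w in the weak order on Y_n. -/

import Mathlib

/-- Planar binary trees: `leaf` is the tree `|` (no interior vertex) and
`node l r = l ∨ r` is the grafting of `l` and `r` (their roots are joined to a new
vertex, which becomes the root). -/
inductive PBTree : Type
  | leaf : PBTree
  | node : PBTree → PBTree → PBTree
deriving DecidableEq

/-- The number of interior vertices of a planar binary tree: `t ∈ Yₙ` iff `t.size = n`. -/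
def PBTree.size : PBTree → ℕ
  | .leaf => 0
  | .node l r => l.size + r.size + 1

/-- The weak order on planar binary trees, generated transitively by
(a) `u ≤ u' → v ≤ v' → u∨v ≤ u'∨v'` and (b) `(u∨v)∨w ≤ u∨(v∨w)`. -/
inductive TreeLe : PBTree → PBTree → Prop
  | refl (t : PBTree) : TreeLe t t
  | graft {u u' v v' : PBTree} : TreeLe u u' → TreeLe v v' →
      TreeLe (.node u v) (.node u' v')
  | rotate (u v w : PBTree) : TreeLe (.node (.node u v) w) (.node u (.node v w))
  | trans {a b c : PBTree} : TreeLe a b → TreeLe b c → TreeLe a c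

/-- `phi t` is `φₙ(t) = (ε₁, …, ε_{n-1}) ∈ Qₙ = {±1}^{n-1}` for `t ∈ Yₙ`: the orientations
of the `n-1` interior leaves of `t` (all leaves except the two extreme ones), where
`εᵢ = -1` if the `i`-th interior leaf is right-oriented (SW–NE, a right child) and
`εᵢ = +1` if it is left-oriented (SE–NW, a left child).  Elements of `Qₙ` are modelled
as lists of integers of length `n-1` with entries `±1`. -/
def phi : PBTree → List ℤ
  | .leaf => []
  | .node .leaf .leaf => []
  | .node .leaf (.node c d) => 1 :: phi (.node c d)
  | .node (.node a b) .leaf => phi (.node a b) ++ [-1]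
  | .node (.node a b) (.node c d) => phi (.node a b) ++ ([-1, 1] ++ phi (.node c d))

/-- Orientations of all leaves. -/
def allL : PBTree → ℤ → List ℤ
  | .leaf, e => [e]
  | .node l r, _ => allL l 1 ++ allL r (-1)

theorem allL_node : ∀ (t l r : PBTree) (e : ℤ), t = .node l r → allL t e = 1 :: (phi t ++ [-1]) := by
  intro t
  induction t with
  | leaf => intro l r e h; cases h
  | node a b iha ihb =>
    intro _ _ e _
    cases a with
    | leaf =>
      cases b with
      | leaf => simp [allL, phi]
      | node c d =>
        have := ihb c d (-1) rfl
        rw [allL, this]; simp [allL, phi]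
    | node a1 a2 =>
      have h1 := iha a1 a2 1 rfl
      cases b with
      | leaf => rw [allL, h1]; simp [allL, phi]
      | node c d =>
        have := ihb c d (-1) rfl
        rw [allL, this, h1]; simp [phi]

theorem allL_le (t : PBTree) : List.Forall₂ (· ≤ ·) (allL t (-1)) (allL t 1) := by
  cases t with
  | leaf => simp [allL]
  | node l r => exact List.forall₂_refl _

theorem forall2_app {a b c d : List ℤ} (h : List.Forall₂ (· ≤ ·) a b)
    (h' : List.Forall₂ (· ≤ ·) c d) : List.Forall₂ (· ≤ ·) (a ++ c) (b ++ d) :=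
  List.rel_append h h'

theorem forall2_tr {a b c : List ℤ} (h : List.Forall₂ (· ≤ ·) a b)
    (h' : List.Forall₂ (· ≤ ·) b c) : List.Forall₂ (· ≤ ·) a c := by
  rw [List.forall₂_iff_get] at *
  exact ⟨h.1.trans h'.1, fun i h1 h2 =>
    le_trans (h.2 i h1 (by have := h.1; omega)) (h'.2 i (by have := h.1; omega) h2)⟩

theorem allL_mono {t w : PBTree} (h : TreeLe t w) :
    ∀ e, List.Forall₂ (· ≤ ·) (allL t e) (allL w e) := by
  induction h with
  | refl t => intro e; exact List.forall₂_refl _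
  | graft _ _ h1 h2 => intro e; exact forall2_app (h1 _) (h2 _)
  | rotate u v w =>
    intro e
    simp only [allL, List.append_assoc]
    exact forall2_app (List.forall₂_refl _) (forall2_app (allL_le v) (List.forall₂_refl _))
  | trans _ _ h1 h2 => intro e; exact forall2_tr (h1 e) (h2 e)

theorem phi_mono {t w : PBTree} (ht : t.size ≠ 0) (hw : w.size ≠ 0) (h : TreeLe t w)
    (i : ℕ) (hi : i < (phi t).length) (hi' : i < (phi w).length) :
    (phi t)[i] ≤ (phi w)[i] := by
  have H := allL_mono h 1
  cases t with
  | leaf => simp [PBTree.size] at ht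
  | node a b =>
    cases w with
    | leaf => simp [PBTree.size] at hw
    | node c d =>
      rw [allL_node _ a b 1 rfl, allL_node _ c d 1 rfl, List.forall₂_cons] at H
      have := H.2.get (i := i) (by simp; omega) (by simp; omega)
      simpa [List.getElem_append_left, hi, hi'] using this

/-- Graft a cherry on the leftmost leaf. -/
def insL : PBTree → PBTree
  | .leaf => .node .leaf .leaf
  | .node l r => .node (insL l) r

theorem insL_size (t : PBTree) : (insL t).size = t.size + 1 := by
  induction t with
  | leaf => rfl
  | node l r ih _ => simp [insL, PBTree.size, ih]; omega

theorem insL_phi (l : PBTree) : ∀ r, phi (insL (.node l r)) = -1 :: phi (.node l r) := by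
  induction l with
  | leaf => intro r; cases r <;> simp [insL, phi]
  | node a b iha _ =>
    intro r
    have := iha b
    simp only [insL] at this
    cases r <;> simp [insL, phi, this]

theorem insL_mono {t w : PBTree} (h : TreeLe t w) : TreeLe (insL t) (insL w) := by
  induction h with
  | refl t => exact .refl _
  | graft _ h2 h1 _ => exact .graft h1 h2
  | rotate u v w => exact .rotate _ _ _
  | trans _ _ h1 h2 => exact .trans h1 h2

theorem insL_le (t : PBTree) : TreeLe (insL t) (.node .leaf t) := by
  induction t with
  | leaf => exact .refl _
  | node l r ih _ => exact .trans (.graft ih (.refl r)) (.rotate _ _ _)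

/-- A monotone section of `phi`. -/
def sec : List ℤ → PBTree
  | [] => .node .leaf .leaf
  | x :: xs => if x = 1 then .node .leaf (sec xs) else insL (sec xs)

theorem sec_size (l : List ℤ) : (sec l).size = l.length + 1 := by
  induction l with
  | nil => rfl
  | cons x xs ih =>
    simp only [sec]
    split_ifs
    · simp [PBTree.size, ih]
    · simp [insL_size, ih]

theorem sec_phi (l : List ℤ) (h : ∀ x ∈ l, x = -1 ∨ x = 1) : phi (sec l) = l := by
  induction l with
  | nil => rfl
  | cons x xs ih =>
    have ih' := ih (fun y hy => h y (List.mem_cons_of_mem _ hy))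
    have hx := h x List.mem_cons_self
    have hs := sec_size xs
    simp only [sec]
    cases hc : sec xs with
    | leaf => rw [hc] at hs; simp [PBTree.size] at hs
    | node a b =>
      rw [hc] at ih'
      split_ifs with h1
      · simp [phi, ih', h1]
      · rw [insL_phi, ih']; simp [hx.resolve_right h1]

theorem sec_mono {l m : List ℤ} (h : List.Forall₂ (· ≤ ·) l m)
    (hm : ∀ x ∈ m, x = -1 ∨ x = 1) : TreeLe (sec l) (sec m) := by
  induction h with
  | nil => exact .refl _
  | @cons a b l m hab _ ih =>
    have ih' := ih (fun y hy => hm y (List.mem_cons_of_mem _ hy))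
    have hb := hm b List.mem_cons_self
    simp only [sec]
    by_cases h2 : b = 1
    · rw [if_pos h2]
      split_ifs
      · exact .graft (.refl _) ih'
      · exact .trans (insL_mono ih') (insL_le _)
    · have : a ≠ 1 := by have := hb.resolve_right h2; omega
      rw [if_neg h2, if_neg this]
      exact insL_mono ih'

/-- Corollaries 3.6, 3.8 and Proposition 3.7: `φₙ : Yₙ → Qₙ` is a
surjective morphism of posets, and the partial order it induces on `Qₙ` coincides with
the componentwise order (with `-1 < +1`): for `ε, η ∈ Qₙ`, `ε ≤ η` componentwise iff
there are trees `t, w ∈ Yₙ` with `φₙ(t) = ε`, `φₙ(w) = η` and `t ≤ w` in the weak order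
on `Yₙ`. -/
theorem stmt18 (n : ℕ) (hn : 2 ≤ n) :
    (∀ ε : List ℤ, ε.length = n - 1 → (∀ x ∈ ε, x = -1 ∨ x = 1) →
      ∃ t : PBTree, t.size = n ∧ phi t = ε) ∧
    (∀ t w : PBTree, t.size = n → w.size = n → TreeLe t w →
      ∀ (i : ℕ) (hi : i < (phi t).length) (hi' : i < (phi w).length),
        (phi t)[i] ≤ (phi w)[i]) ∧
    (∀ ε η : List ℤ, ε.length = n - 1 → η.length = n - 1 →
      (∀ x ∈ ε, x = -1 ∨ x = 1) → (∀ x ∈ η, x = -1 ∨ x = 1) →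
      ((∀ (i : ℕ) (hi : i < ε.length) (hi' : i < η.length), ε[i] ≤ η[i]) ↔
        (∃ t w : PBTree, t.size = n ∧ w.size = n ∧ phi t = ε ∧ phi w = η ∧
          TreeLe t w))) := by
  refine ⟨fun ε hl hε => ⟨sec ε, by rw [sec_size]; omega, sec_phi ε hε⟩, ?_, ?_⟩
  · intro t w ht hw h
    exact phi_mono (by omega) (by omega) h
  · intro ε η hl hl' hε hη
    constructor
    · intro h
      refine ⟨sec ε, sec η, by rw [sec_size]; omega, by rw [sec_size]; omega, sec_phi ε hε,
        sec_phi η hη, sec_mono ?_ hη⟩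
      rw [List.forall₂_iff_get]
      exact ⟨by omega, fun i h1 h2 => h i h1 h2⟩
    · rintro ⟨t, w, ht, hw, rfl, rfl, h⟩
      exact phi_mono (by omega) (by omega) h
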